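/- arXiv:1808.02377 — 4 statements merged into one kernel-verified Lean document; each statement's English description precedes it below -/
import Mathlib

section
/- Let n ≥ 1, let I be a subset of Fin n, and let f : ℝⁿ → ℝ be a function such that for every i ∈ I the function x ↦ f(x with its i-th coordinate replaced by 0) is infinitely differentiable on ℝⁿ (this expresses that the restriction of f to each hyperface {x : x_i = 0} of the sector {x : x_j ≥ 0 for all j ∈ I} is smooth). Then there exists an infinitely differentiable function F : ℝⁿ → ℝ such that F(x) = f(x) for every x ∈ ℝⁿ having x_i = 0 for at least one i ∈ I; in particular F is a smooth extension to the sector of the restriction of f to the union of the hyperfaces of the sector. -/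
/-! The extension is built by adding one hyperface at a time. If `F` is smooth and agrees with `f`
on the hyperplanes `x j = 0`, `j ∈ s`, and `p` sets the `i`-th coordinate to zero, then
`F + (f ∘ p - F ∘ p)` is smooth, because `f ∘ p` is smooth by hypothesis. It equals `f` where
`x i = 0`, since `p x = x` there. It still equals `f` on the earlier hyperplanes: `p` maps each of
them to itself, so the correction vanishes there. Unfolding the recursion gives the
inclusion-exclusion formula `-∑ (-1)^|J| f ∘ pr_J` over nonempty `J ⊆ I`. -/

theorem contDiff_update_zero {n : ℕ} (i : Fin n) :
    ContDiff ℝ (⊤ : ℕ∞) (fun x : Fin n → ℝ => Function.update x i 0) := by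
  rw [contDiff_pi]
  intro j
  rcases eq_or_ne j i with rfl | h
  · simpa using contDiff_const
  · simpa [Function.update_of_ne h] using contDiff_apply ℝ ℝ j

/-- Smooth extension from the hyperfaces of a sector: if for every `i ∈ I` the
function `x ↦ f (update x i 0)` is smooth, then there is a globally smooth `F`
agreeing with `f` at every point having some vanishing coordinate indexed in `I`. -/
theorem sector_smooth_extension (n : ℕ) (hn : 1 ≤ n) (I : Finset (Fin n))
    (f : (Fin n → ℝ) → ℝ)
    (hf : ∀ i ∈ I, ContDiff ℝ (⊤ : ℕ∞) (fun x : Fin n → ℝ => f (Function.update x i 0))) :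
    ∃ F : (Fin n → ℝ) → ℝ, ContDiff ℝ (⊤ : ℕ∞) F ∧
      ∀ x : Fin n → ℝ, (∃ i ∈ I, x i = 0) → F x = f x := by
  clear hn
  induction I using Finset.induction_on with
  | empty => exact ⟨0, contDiff_const, by simp⟩
  | insert i s _ ih =>
    obtain ⟨F, hF, hFf⟩ := ih fun j hj => hf j (Finset.mem_insert_of_mem hj)
    refine ⟨fun x => F x + (f (Function.update x i 0) - F (Function.update x i 0)),
      hF.add ((hf i (Finset.mem_insert_self i s)).sub (hF.comp (contDiff_update_zero i))), ?_⟩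
    rintro x ⟨j, hj, hxj⟩
    by_cases hxi : x i = 0
    · have hx : Function.update x i 0 = x := by rw [← hxi, Function.update_eq_self]
      simp [hx]
    · have hji : j ≠ i := fun h => hxi (h ▸ hxj)
      have hjs : j ∈ s := Finset.mem_of_mem_insert_of_ne hj hji
      -- Setting the `i`-th coordinate to zero keeps `x` on the hyperplane of index `j`.
      have hu : F (Function.update x i 0) = f (Function.update x i 0) :=
        hFf _ ⟨j, hjs, by rw [Function.update_of_ne hji, hxj]⟩
      simp [hu, hFf x ⟨j, hjs, hxj⟩]
end

section
/- Let E be a finite-dimensional real normed vector space, let K be a geometric simplicial complex in E having only finitely many faces, and let L be a subcomplex of K (every face of L is a face of K). Let f : E → ℝ be simplexwise smooth on L, i.e., for every face s of L, f is C^∞ on the simplex convexHull ℝ (s) (in the sense of ContDiffOn ℝ ⊤). Then there exists F : E → ℝ which is simplexwise smooth on K, i.e., C^∞ on convexHull ℝ (s) for every face s of K, and which coincides with f on the underlying space of L (the union of the convex hulls of the faces of L). -/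
/-!
The complex `K` is filled in one simplex at a time, always adding a simplex `s` of least cardinality
among those still missing, so that the function is already smooth on every proper face of `s`.
Everything then rests on extending `f` from the boundary of one simplex to the simplex
(`exists_extend_simplex`), for which there is an explicit formula.

Let `t v` (`v ∈ s`) be the barycentric coordinates, extended to affine functions on `E`. For a vertex
`v` and `I ⊆ s \ {v}`, the affine map `r v I x = x + ∑ w ∈ I, t w x • (v - w)` moves the mass of the
vertices in `I` to `v`; it maps the simplex to its face `s \ I`. By inclusion-exclusion,
`F v = ∑ I ≠ ∅, (-1) ^ (|I| + 1) • f ∘ r v I` is smooth on the simplex and agrees with `f` on every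
facet containing `v`: if `t j x = 0` with `j ≠ v`, then `r v I x = r v (I ∪ {j}) x`, so the terms
cancel in pairs. The function `∑ v ∈ s, t v * F v` then agrees with `f` on the whole boundary, since
the coefficient `t v` kills the one term `F v` that may differ from `f` on the facet opposite `v`.
-/

/-- Barycentric coordinates of a simplex, extended to affine functions on the whole space. -/
lemma exists_barycentric {E : Type*} [NormedAddCommGroup E] [NormedSpace ℝ E]
    (s : Finset E) (hs : AffineIndependent ℝ ((↑) : s → E)) :
    ∃ t : E → E →ᵃ[ℝ] ℝ, (∀ v ∈ s, t v v = 1) ∧ ∀ v ∈ s, ∀ w ∈ s, v ≠ w → t v w = 0 := by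
  classical
  obtain ⟨T, hsT, hT, hspan⟩ := exists_subset_affineIndependent_affineSpan_eq_top hs
  let b : AffineBasis T ℝ E := ⟨((↑) : T → E), hT, by simpa using hspan⟩
  refine ⟨fun v => if h : v ∈ T then b.coord ⟨v, h⟩ else 0, fun v hv => ?_, fun v hv w hw hvw => ?_⟩
  · have h : v ∈ T := hsT hv
    simp only [dif_pos h]
    exact b.coord_apply_eq ⟨v, h⟩
  · have h : v ∈ T := hsT hv
    have h' : w ∈ T := hsT hw
    simp only [dif_pos h]
    exact b.coord_apply_ne (i := ⟨v, h⟩) (j := ⟨w, h'⟩) (by simpa using hvw)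

lemma AffineMap.eq_const_on_convexHull {E : Type*} [AddCommGroup E] [Module ℝ E]
    (g : E →ᵃ[ℝ] ℝ) (c : ℝ) (u : Set E) (hu : ∀ w ∈ u, g w = c) :
    ∀ x ∈ convexHull ℝ u, g x = c := fun _ hx =>
  convexHull_min (t := g ⁻¹' {c}) hu ((convex_singleton c).affine_preimage g) hx

lemma AffineMap.contDiff_of_finiteDimensional {E W : Type*} [NormedAddCommGroup E]
    [NormedSpace ℝ E] [FiniteDimensional ℝ E] [NormedAddCommGroup W] [NormedSpace ℝ W]
    (g : E →ᵃ[ℝ] W) : ContDiff ℝ (⊤ : ℕ∞) g :=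
  (⟨g, g.continuous_of_finiteDimensional⟩ : E →ᴬ[ℝ] W).contDiff

/-- The affine map moving the barycentric mass of the vertices in `I` to the vertex `v`, where `t`
is a family of barycentric coordinates. -/
noncomputable def pushMass {E : Type*} [AddCommGroup E] [Module ℝ E]
    (t : E → E →ᵃ[ℝ] ℝ) (v : E) (I : Finset E) : E →ᵃ[ℝ] E :=
  AffineMap.id ℝ E +
    ∑ w ∈ I, ((LinearMap.toSpanSingleton ℝ E (v - w)).toAffineMap.comp (t w))

lemma pushMass_apply {E : Type*} [AddCommGroup E] [Module ℝ E]
    (t : E → E →ᵃ[ℝ] ℝ) (v : E) (I : Finset E) (x : E) :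
    pushMass t v I x = x + ∑ w ∈ I, t w x • (v - w) := by
  classical
  have h : ∀ I : Finset E,
      (∑ w ∈ I, ((LinearMap.toSpanSingleton ℝ E (v - w)).toAffineMap.comp (t w))) x
        = ∑ w ∈ I, t w x • (v - w) := by
    intro I
    induction I using Finset.induction_on with
    | empty => simp
    | insert a I ha ih => simp [Finset.sum_insert ha, ih]
  simp [pushMass, h]

/-- A function that is smooth on every proper face of a simplex extends from the boundary to a
function that is smooth on the simplex. -/
lemma exists_extend_simplex {E : Type*} [NormedAddCommGroup E]
    [NormedSpace ℝ E] [FiniteDimensional ℝ E]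
    (s : Finset E) (hs : AffineIndependent ℝ ((↑) : s → E)) (f : E → ℝ)
    (hf : ∀ u : Finset E, u.Nonempty → u ⊂ s →
      ContDiffOn ℝ (⊤ : ℕ∞) f (convexHull ℝ (u : Set E))) :
    ∃ G : E → ℝ, ContDiffOn ℝ (⊤ : ℕ∞) G (convexHull ℝ (s : Set E)) ∧
      ∀ u : Finset E, u ⊂ s → ∀ x ∈ convexHull ℝ (u : Set E), G x = f x := by
  classical
  obtain ⟨t, ht1, ht0⟩ := exists_barycentric s hs
  refine ⟨fun x => ∑ v ∈ s, t v x *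
    -∑ I ∈ (s.erase v).powerset.erase ∅, (-1 : ℝ) ^ I.card * f (pushMass t v I x), ?_, ?_⟩
  · refine ContDiffOn.sum fun v hv =>
      (AffineMap.contDiff_of_finiteDimensional (t v)).contDiffOn.mul
      (ContDiffOn.neg (ContDiffOn.sum fun I hI => contDiffOn_const.mul ?_))
    simp only [Finset.mem_erase, Finset.mem_powerset] at hI
    obtain ⟨hne, hI⟩ := hI
    obtain ⟨j, hj⟩ := Finset.nonempty_iff_ne_empty.mpr hne
    have hvI : v ∉ I := fun h => by simpa using hI h
    have hIs : I ⊆ s := hI.trans (Finset.erase_subset _ _)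
    refine (hf (s \ I) ⟨v, by simp [hv, hvI]⟩ ?_).comp (AffineMap.contDiff_of_finiteDimensional _).contDiffOn ?_
    · exact Finset.ssubset_iff_subset_ne.2 ⟨Finset.sdiff_subset, fun h => by
        have := h ▸ hIs hj
        simp [hj] at this⟩
    · refine convexHull_min (t := (pushMass t v I) ⁻¹' _) ?_ ((convex_convexHull ℝ _).affine_preimage _)
      intro w hw
      have hw : w ∈ s := hw
      apply subset_convexHull
      by_cases hwI : w ∈ I
      · have : pushMass t v I w = v := by
          rw [pushMass_apply, Finset.sum_eq_single w, ht1 w hw]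
          · simp
          · intro a ha haw
            simp [ht0 a (hIs ha) w hw haw]
          · simp [hwI]
        simp [this, hv, hvI]
      · have : pushMass t v I w = w := by
          rw [pushMass_apply, Finset.sum_eq_zero]
          · simp
          · intro a ha
            have : a ≠ w := fun h => hwI (h ▸ ha)
            simp [ht0 a (hIs ha) w hw this]
        simp [this, hw, hwI]
  · intro u hu x hx
    obtain ⟨j, hjs, hju⟩ := Finset.exists_of_ssubset hu
    have hj : t j x = 0 := AffineMap.eq_const_on_convexHull (t j) 0 u
      (fun w hw => ht0 j hjs w (hu.1 hw) (fun h => hju (h ▸ hw))) x hx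
    have hsum : ∑ v ∈ s, t v x = 1 := by
      have h : ∀ x, (∑ v ∈ s, t v) x = ∑ v ∈ s, t v x := fun x =>
        map_sum (⟨⟨fun g : E →ᵃ[ℝ] ℝ => g x, rfl⟩, fun _ _ => rfl⟩ : (E →ᵃ[ℝ] ℝ) →+ ℝ) t s
      rw [← h]
      refine AffineMap.eq_const_on_convexHull (∑ v ∈ s, t v) 1 u (fun w hw => ?_) x hx
      rw [h, Finset.sum_eq_single w, ht1 w (hu.1 hw)]
      · exact fun a ha haw => ht0 a ha w (hu.1 hw) haw
      · exact fun h => (h (hu.1 hw)).elim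
    have key : ∀ v ∈ s, t v x *
        -∑ I ∈ (s.erase v).powerset.erase ∅, (-1 : ℝ) ^ I.card * f (pushMass t v I x)
          = t v x * f x := by
      intro v hv
      by_cases hvj : v = j
      · simp [hvj, hj]
      congr 1
      have hjv : j ∈ s.erase v := Finset.mem_erase.2 ⟨fun h => hvj h.symm, hjs⟩
      -- toggling `j` in `I` changes the sign but not the point `pushMass t v I x`
      have h0 : ∑ I ∈ (s.erase v).powerset, (-1 : ℝ) ^ I.card * f (pushMass t v I x) = 0 := by
        rw [← Finset.insert_erase hjv, Finset.sum_powerset_insert (Finset.notMem_erase _ _),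
          ← Finset.sum_add_distrib]
        refine Finset.sum_eq_zero fun I hI => ?_
        have hjI : j ∉ I := fun h => by simpa using Finset.mem_powerset.1 hI h
        have : pushMass t v (insert j I) x = pushMass t v I x := by
          simp [pushMass_apply, Finset.sum_insert hjI, hj]
        rw [this, Finset.card_insert_of_notMem hjI]
        ring
      have h1 := Finset.add_sum_erase (s.erase v).powerset
        (fun I => (-1 : ℝ) ^ I.card * f (pushMass t v I x)) (Finset.empty_mem_powerset _)
      simp only [h0] at h1
      have h2 : pushMass t v ∅ x = x := by simp [pushMass_apply]
      simp only [h2, Finset.card_empty, pow_zero, one_mul] at h1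
      linarith
    simp only
    rw [Finset.sum_congr rfl key, ← Finset.sum_mul, hsum, one_mul]

/-- Extension of simplexwise smooth functions from a subcomplex `L` of a finite
geometric simplicial complex `K` to all of `K`. -/
theorem simplexwise_smooth_extension {E : Type*} [NormedAddCommGroup E]
    [NormedSpace ℝ E] [FiniteDimensional ℝ E]
    (K L : Geometry.SimplicialComplex ℝ E)
    (hKfin : K.faces.Finite) (hLK : L.faces ⊆ K.faces)
    (f : E → ℝ)
    (hf : ∀ s ∈ L.faces, ContDiffOn ℝ (⊤ : ℕ∞) f (convexHull ℝ (s : Set E))) :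
    ∃ F : E → ℝ,
      (∀ s ∈ K.faces, ContDiffOn ℝ (⊤ : ℕ∞) F (convexHull ℝ (s : Set E))) ∧
      ∀ x ∈ L.space, F x = f x := by
  classical
  induction hn : (K.faces \ L.faces).ncard using Nat.strong_induction_on generalizing L f with
  | _ n ih =>
  by_cases hne : (K.faces \ L.faces).Nonempty
  swap
  · exact ⟨f, fun s hs => hf s (by_contra fun h => hne ⟨s, hs, h⟩), fun _ _ => rfl⟩
  obtain ⟨s, ⟨hsK, hsL⟩, hmin⟩ := Set.exists_min_image (K.faces \ L.faces) Finset.card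
    (hKfin.subset Set.sdiff_subset) hne
  have hface : ∀ u : Finset E, u.Nonempty → u ⊂ s → u ∈ L.faces := fun u hu hus =>
    by_contra fun h => absurd (hmin u ⟨K.down_closed hsK hus.1 hu, h⟩)
      (not_le.2 (Finset.card_lt_card hus))
  obtain ⟨G, hG, hGf⟩ := exists_extend_simplex s (K.indep hsK) f
    (fun u hu hus => hf u (hface u hu hus))
  let L' : Geometry.SimplicialComplex ℝ E :=
    { faces := insert s L.faces
      indep := fun h => K.indep (Set.insert_subset hsK hLK h)
      isRelLowerSet_faces := by
        rintro a (rfl | ha)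
        · refine ⟨K.nonempty_of_mem_faces hsK, fun u hus hu => ?_⟩
          rcases eq_or_ne u a with rfl | hne
          · exact Or.inl rfl
          · exact Or.inr (hface u hu (Finset.ssubset_iff_subset_ne.2 ⟨hus, hne⟩))
        · exact ⟨L.nonempty_of_mem_faces ha, fun u hua hu => Or.inr (L.down_closed ha hua hu)⟩
      inter_subset_convexHull := fun h h' => K.inter_subset_convexHull
        (Set.insert_subset hsK hLK h) (Set.insert_subset hsK hLK h') }
  let f' : E → ℝ := fun x => if x ∈ convexHull ℝ (s : Set E) then G x else f x
  have hf'L : ∀ u ∈ L.faces, ∀ x ∈ convexHull ℝ (u : Set E), f' x = f x := by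
    intro u hu x hxu
    by_cases hxs : x ∈ convexHull ℝ (s : Set E)
    · have hx : x ∈ convexHull ℝ ((s ∩ u : Finset E) : Set E) := by
        rw [Finset.coe_inter]
        exact K.inter_subset_convexHull hsK (hLK hu) ⟨hxs, hxu⟩
      have hss : s ∩ u ⊂ s := by
        refine Finset.ssubset_iff_subset_ne.2 ⟨Finset.inter_subset_left, fun h => hsL ?_⟩
        exact L.down_closed hu (Finset.inter_eq_left.1 h) (K.nonempty_of_mem_faces hsK)
      simpa [f', hxs] using hGf _ hss x hx
    · simp [f', hxs]
  have hlt : (K.faces \ L'.faces).ncard < n := by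
    rw [← hn]
    refine Set.ncard_lt_ncard ?_ (hKfin.subset Set.sdiff_subset)
    exact ⟨fun u hu => ⟨hu.1, fun h => hu.2 (Or.inr h)⟩,
      fun h => (h ⟨hsK, hsL⟩).2 (Set.mem_insert _ _)⟩
  have hf' : ∀ u ∈ L'.faces, ContDiffOn ℝ (⊤ : ℕ∞) f' (convexHull ℝ (u : Set E)) := by
    rintro u (rfl | hu)
    · exact hG.congr fun x hx => by simp [f', hx]
    · exact (hf u hu).congr (hf'L u hu)
  obtain ⟨F, hF, hFf⟩ := ih _ hlt L' (Set.insert_subset hsK hLK) f' hf' rfl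
  refine ⟨F, hF, fun x hx => ?_⟩
  obtain ⟨u, hu, hxu⟩ := Geometry.SimplicialComplex.mem_space_iff.1 hx
  rw [hFf x (Geometry.SimplicialComplex.mem_space_iff.2 ⟨u, Or.inr hu, hxu⟩), hf'L u hu x hxu]
end

section
/- Let E be a real vector space (regarded as an affine space over itself), let d ≥ 1, and let p : Fin (d+1) → E be an affinely independent family of points. Let v = (centroid of p over all of Fin (d+1)) − (centroid of p over Fin (d+1) with the index 0 removed). Then for every proper subset s ⊊ Fin (d+1), the vector v does not belong to the vector span (direction of the affine span) of the points {p_i : i ∈ s}. In particular v ≠ 0. -/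
/-! The vector `v` is the combination of the vertices with coefficients `1/(d+1)` at `p 0` and
`1/(d+1) - 1/d` at every other vertex; these sum to zero and none of them vanishes. A vector
parallel to the face on `s` is a combination of the vertices whose coefficients sum to zero and
vanish off `s` (`exists_weights_of_mem_vectorSpan_image`). By affine independence such
coefficients are unique, so `v` is parallel to no face that misses a vertex. The empty face
gives `v ≠ 0`. -/

/-- Vectors in the span of the face on `s` have coefficients that sum to zero and are extended
by zero to the whole index type, so that they can be compared with other coefficients there. -/
lemma exists_weights_of_mem_vectorSpan_image {ι E : Type*} [Fintype ι] [AddCommGroup E]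
    [Module ℝ E] (p : ι → E) (s : Set ι) {v : E} (hv : v ∈ vectorSpan ℝ (p '' s)) :
    ∃ w : ι → ℝ, (∀ i, i ∉ s → w i = 0) ∧ ∑ i, w i = 0 ∧ ∑ i, w i • p i = v := by
  classical
  rw [vectorSpan_def] at hv
  induction hv using Submodule.span_induction with
  | mem x hx =>
    obtain ⟨_, ⟨a, ha, rfl⟩, _, ⟨b, hb, rfl⟩, rfl⟩ := hx
    refine ⟨fun i => (if i = a then 1 else 0) - (if i = b then 1 else 0), ?_, ?_, ?_⟩
    · intro i hi
      have h1 : i ≠ a := fun h => hi (h ▸ ha)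
      have h2 : i ≠ b := fun h => hi (h ▸ hb)
      simp [h1, h2]
    · simp
    · simp [sub_smul, ite_smul]
  | zero => exact ⟨0, by simp, by simp, by simp⟩
  | add x y _ _ hx hy =>
    obtain ⟨w, h1, h2, h3⟩ := hx
    obtain ⟨u, k1, k2, k3⟩ := hy
    refine ⟨w + u, fun i hi => by simp [h1 i hi, k1 i hi], ?_, ?_⟩
    · simp [Finset.sum_add_distrib, h2, k2]
    · simp [add_smul, Finset.sum_add_distrib, h3, k3]
  | smul c x _ hx =>
    obtain ⟨w, h1, h2, h3⟩ := hx
    refine ⟨c • w, fun i hi => by simp [h1 i hi], ?_, ?_⟩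
    · simp [← Finset.mul_sum, h2]
    · simp [mul_smul, ← Finset.smul_sum, h3]

lemma centroid_eq_smul_sum {ι E : Type*} [AddCommGroup E] [Module ℝ E] (s : Finset ι)
    (hs : s.Nonempty) (p : ι → E) :
    s.centroid ℝ p = (s.card : ℝ)⁻¹ • ∑ i ∈ s, p i := by
  rw [Finset.centroid_def, Finset.affineCombination_eq_linear_combination _ _ _
    (s.sum_centroidWeights_eq_one_of_nonempty ℝ hs)]
  simp [Finset.smul_sum]

/-- The vector from the barycenter of the hyperface opposite to the vertex `p 0`
to the barycenter of an affinely independent simplex is not parallel to any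
proper face; in particular it is nonzero. -/
theorem barycenter_vector_not_parallel_to_proper_face {E : Type*} [AddCommGroup E]
    [Module ℝ E] (d : ℕ) (hd : 1 ≤ d) (p : Fin (d + 1) → E)
    (hp : AffineIndependent ℝ p) (v : E)
    (hv : v = Finset.univ.centroid ℝ p - (Finset.univ.erase 0).centroid ℝ p) :
    (∀ s : Finset (Fin (d + 1)), s ⊂ Finset.univ →
      v ∉ vectorSpan ℝ (p '' (s : Set (Fin (d + 1))))) ∧ v ≠ 0 := by
  have key : ∀ s : Finset (Fin (d + 1)), s ⊂ Finset.univ →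
      v ∉ vectorSpan ℝ (p '' (s : Set (Fin (d + 1)))) := by
    intro s hs hmem
    obtain ⟨w, hw, hw0, hwv⟩ := exists_weights_of_mem_vectorSpan_image p s hmem
    obtain ⟨j, -, hj⟩ := Finset.exists_of_ssubset hs
    have hd0 : (d : ℝ) ≠ 0 := by positivity
    have hd1 : (d : ℝ) + 1 ≠ 0 := by positivity
    have hcard : (Finset.univ.erase (0 : Fin (d + 1))).card = d := by simp
    have hne : (Finset.univ.erase (0 : Fin (d + 1))).Nonempty :=
      Finset.card_pos.mp (by omega)
    let c : Fin (d + 1) → ℝ := fun i => ((d : ℝ) + 1)⁻¹ - if i = 0 then 0 else (d : ℝ)⁻¹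
    have hc0 : ∑ i, c i = 0 := by
      simp [c, Fin.sum_univ_succ]
      field_simp
      ring
    have hcv : ∑ i, c i • p i = v := by
      rw [hv, centroid_eq_smul_sum _ Finset.univ_nonempty, centroid_eq_smul_sum _ hne, hcard,
        Finset.smul_sum, Finset.smul_sum, ← Finset.filter_ne', Finset.sum_filter,
        ← Finset.sum_sub_distrib]
      refine Finset.sum_congr rfl fun i _ => ?_
      by_cases hi : i = 0 <;> simp [c, hi, sub_smul]
    have hdiff : c j - w j = 0 :=
      affineIndependent_iff.mp hp Finset.univ (fun i => c i - w i)
        (by rw [Finset.sum_sub_distrib, hc0, hw0, sub_zero])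
        (by simp only [sub_smul, Finset.sum_sub_distrib, hcv, hwv, sub_self])
        j (Finset.mem_univ j)
    rw [hw j (by simpa using hj), sub_zero] at hdiff
    by_cases hj0 : j = 0
    · simp [c, hj0, hd1] at hdiff
    · simp only [c, hj0, if_false, sub_eq_zero, inv_inj] at hdiff
      linarith
  refine ⟨key, fun h0 => key ∅ ?_ (h0 ▸ Submodule.zero_mem _)⟩
  exact Finset.empty_ssubset.mpr Finset.univ_nonempty
end

section
/- Let n, m be natural numbers, let A ⊆ ℝⁿ be a closed set, let U ⊆ ℝⁿ be an open set containing A, and let f : ℝⁿ → ℝᵐ be a continuous map which is C^∞ on U (ContDiffOn ℝ ⊤ f U). Then for every ε > 0 there exists a map g : ℝⁿ → ℝᵐ which is C^∞ on all of ℝⁿ, coincides with f at every point of A, and satisfies ‖g(x) − f(x)‖ ≤ ε for every x ∈ ℝⁿ. -/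
/-- Whitney-type relative smooth approximation: a continuous map which is smooth
on an open neighborhood `U` of a closed set `A` can be `ε`-approximated by a
globally smooth map agreeing with it on `A`. -/
theorem whitney_relative_approximation (n m : ℕ)
    (A U : Set (EuclideanSpace ℝ (Fin n)))
    (hA : IsClosed A) (hU : IsOpen U) (hAU : A ⊆ U)
    (f : EuclideanSpace ℝ (Fin n) → EuclideanSpace ℝ (Fin m))
    (hfc : Continuous f) (hf : ContDiffOn ℝ (⊤ : ℕ∞) f U) :
    ∀ ε > (0 : ℝ), ∃ g : EuclideanSpace ℝ (Fin n) → EuclideanSpace ℝ (Fin m),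
      ContDiff ℝ (⊤ : ℕ∞) g ∧ (∀ x ∈ A, g x = f x) ∧ ∀ x, ‖g x - f x‖ ≤ ε := by
  intro ε hε
  -- Mathlib's relative approximation theorem, with the constant function `ε` as error bound
  obtain ⟨g, hg, hclose, hEq, -⟩ := hfc.exists_contDiff_approx_and_eqOn ⊤
    (continuous_const (y := ε)) (fun _ ↦ hε) hA (hU.mem_nhdsSet.2 hAU) hf
  exact ⟨g, hg, hEq, fun x ↦ by simpa [dist_eq_norm] using (hclose x).le⟩
end
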